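/- Let G be a finite simple graph with node set N, let a ∈ N, and let Q be a MultiSLP equivalent to P_G satisfying: (i) every temporal variable of Q whose value is e_x + e_y for two constants x, y is defined by the statement v ← x ⊕ y, and every temporal variable whose value is e_x + e_y + e_z for three constants is defined by v ← x ⊕ y ⊕ z; and (ii) the defining statement of every goal variable either has exactly two arguments or is of the form g ← ρ ⊕ x ⊕ y with constants x, y. Suppose Q contains no variable Γ_a (i.e., no temporal variable with value e_ρ + e_a). Then for the local node λ_a, at least one of the following holds: the goal g_{aλ_a} is defined by the statement g_{aλ_a} ← ρ ⊕ a ⊕ λ_a, or the constant λ_a freely appears in Q; and the same holds for μ_a. -/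

import Mathlib

/-- Terms of a MultiSLP over a set of constants `C`:
either a constant, or a variable referenced by its statement index. -/
inductive Term (C : Type) where
  | const : C → Term C
  | var : ℕ → Term C
  deriving DecidableEq

/-- A MultiSLP over the constants `C`: a sequence of statements
`v_i ← ⊕(t_{i,1},…,t_{i,n_i})` (statement `i` defines variable `i`, each `n_i ≥ 2`,
and every variable used in statement `i` has index `< i`), followed by a return
list of terms whose variables are all defined. -/
structure MultiSLP (C : Type) where
  stmts : List (List (Term C))
  ret : List (Term C)
  arity : ∀ args ∈ stmts, 2 ≤ args.length
  wfStmts : ∀ i, i < stmts.length → ∀ t ∈ stmts.getD i [], ∀ j, t = Term.var j → j < i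
  wfRet : ∀ t ∈ ret, ∀ j, t = Term.var j → j < stmts.length

/-- The value of a constant `c` is the standard basis vector `e_c` of `GF(2)^C`. -/
def eConst {C : Type} [DecidableEq C] (c : C) : C → ZMod 2 := fun d => if d = c then 1 else 0

/-- Value of a term, given the list of values of the previously defined variables. -/
def Term.eval {C : Type} [DecidableEq C] (env : List (C → ZMod 2)) : Term C → (C → ZMod 2)
  | .const c => eConst c
  | .var j => env.getD j 0

/-- Values of the variables of a MultiSLP: the value of variable `i` is the GF(2)-sum
(XOR) of the values of the arguments of statement `i`. -/
def MultiSLP.envList {C : Type} [DecidableEq C] (P : MultiSLP C) : List (C → ZMod 2) :=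
  P.stmts.foldl (fun env args => env ++ [(args.map (Term.eval env)).sum]) []

/-- The result of a MultiSLP: the tuple of values of its returned terms. -/
def MultiSLP.result {C : Type} [DecidableEq C] (P : MultiSLP C) : List (C → ZMod 2) :=
  P.ret.map (Term.eval P.envList)

/-- The value of variable `i` of a MultiSLP. -/
def MultiSLP.value {C : Type} [DecidableEq C] (P : MultiSLP C) (i : ℕ) : C → ZMod 2 :=
  P.envList.getD i 0

/-- The memory-access cost `#_M(P) = Σ_i (n_i + 1)`. -/
def MultiSLP.costM {C : Type} (P : MultiSLP C) : ℕ :=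
  (P.stmts.map fun args => args.length + 1).sum
/-- The constants used by `P_G`: the fresh constant `ρ`, the nodes of `G`,
and for each node `a` the fresh local nodes `λ_a` and `μ_a`. -/
inductive Const (N : Type) where
  | rho : Const N
  | node : N → Const N
  | lam : N → Const N
  | mu : N → Const N
  deriving DecidableEq

/-- The result of `P_G`: the family of values `e_ρ + e_x + e_y` indexed by the
edges of `G_modif` (first the edges of `G`, enumerated by the list `L`, then for
each node `a` — enumerated by `nodes` — the two local edges `(a,λ_a)` and `(a,μ_a)`).
A MultiSLP `Q` is equivalent to `P_G` iff `Q.result = targetValues L nodes`. -/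
def targetValues {N : Type} [DecidableEq N] (L : List (N × N)) (nodes : List N) :
    List (Const N → ZMod 2) :=
  (L.map fun p =>
    eConst Const.rho + eConst (Const.node p.1) + eConst (Const.node p.2))
  ++ nodes.flatMap fun a =>
      [eConst Const.rho + eConst (Const.node a) + eConst (Const.lam a),
       eConst Const.rho + eConst (Const.node a) + eConst (Const.mu a)]

/-- A constant `c` *freely appears* in `Q` if it occurs as an argument of the defining
statement of some temporal (non-returned) variable of `Q`. -/
def FreeConst {C : Type} (Q : MultiSLP C) (c : C) : Prop :=
  ∃ k, k < Q.stmts.length ∧ Term.var k ∉ Q.ret ∧ Term.const c ∈ Q.stmts.getD k []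


section Helpers

/-- The environment computed from a list of statements. -/
def envOf {C : Type} [DecidableEq C] (l : List (List (Term C))) : List (C → ZMod 2) :=
  l.foldl (fun env args => env ++ [(args.map (Term.eval env)).sum]) []

theorem envOf_append {C : Type} [DecidableEq C] (l : List (List (Term C))) (x : List (Term C)) :
    envOf (l ++ [x]) = envOf l ++ [(x.map (Term.eval (envOf l))).sum] := by
  simp [envOf]

theorem envOf_length {C : Type} [DecidableEq C] (l : List (List (Term C))) :
    (envOf l).length = l.length := by
  induction l using List.reverseRecOn with
  | nil => rfl
  | append_singleton l x ih => simp [envOf_append, ih]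

theorem eval_append {C : Type} [DecidableEq C] (E F : List (C → ZMod 2)) (t : Term C)
    (h : ∀ j, t = Term.var j → j < E.length) : Term.eval (E ++ F) t = Term.eval E t := by
  cases t with
  | const c => rfl
  | var j =>
    have := h j rfl
    simp only [Term.eval]
    exact List.getD_append _ _ _ _ this

theorem envOf_getD {C : Type} [DecidableEq C] (l : List (List (Term C)))
    (wf : ∀ i, i < l.length → ∀ t ∈ l.getD i [], ∀ j, t = Term.var j → j < i) :
    ∀ i, i < l.length →
      (envOf l).getD i 0 = ((l.getD i []).map (Term.eval (envOf l))).sum := by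
  induction l using List.reverseRecOn with
  | nil => intro i hi; simp at hi
  | append_singleton l x ih =>
    intro i hi
    have hmap : ((l ++ [x]).getD i []).map (Term.eval (envOf (l ++ [x])))
        = ((l ++ [x]).getD i []).map (Term.eval (envOf l)) := by
      apply List.map_congr_left
      intro t ht
      rw [envOf_append]
      apply eval_append
      intro j hj
      have h1 := wf i hi t ht j hj
      rw [envOf_length]
      simp at hi
      omega
    rw [hmap]
    rw [envOf_append]
    by_cases h : i < l.length
    · rw [List.getD_append _ _ _ _ (by rw [envOf_length]; exact h),
        List.getD_append _ _ _ _ h]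
      apply ih _ i h
      intro k hk t ht
      apply wf k (by simp; omega) t
      rwa [List.getD_append _ _ _ _ hk]
    · have hi' : i = l.length := by simp at hi; omega
      subst hi'
      rw [List.getD_append_right _ _ _ _ (by rw [envOf_length]),
        List.getD_append_right _ _ _ _ le_rfl]
      simp [envOf_length]

theorem value_eq {C : Type} [DecidableEq C] (Q : MultiSLP C) (i : ℕ) (hi : i < Q.stmts.length) :
    Q.value i = ((Q.stmts.getD i []).map (Term.eval Q.envList)).sum :=
  envOf_getD Q.stmts Q.wfStmts i hi

theorem list_sum_apply_zero {C : Type} (l : List (C → ZMod 2)) (c : C)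
    (h : ∀ f ∈ l, f c = 0) : l.sum c = 0 := by
  induction l with
  | nil => rfl
  | cons f l ih =>
    simp only [List.sum_cons, Pi.add_apply]
    rw [h f (by simp), ih (fun g hg => h g (by simp [hg])), add_zero]

theorem zmod2_ne (z : ZMod 2) (h : z ≠ 1) : z = 0 := by
  revert h; revert z; decide

theorem fun_add_self {C : Type} (f : C → ZMod 2) : f + f = 0 := by
  funext c
  exact CharTwo.add_self_eq_zero _

theorem core {N : Type} [DecidableEq N] (Q : MultiSLP (Const N)) (a : N) (c : Const N)
    (hcr : c ≠ Const.rho) (hca : c ≠ Const.node a)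
    (hGoal : ∀ i, i < Q.stmts.length → Term.var i ∈ Q.ret →
      (Q.stmts.getD i []).length = 2 ∨
      ∃ x y : Const N,
        (Q.stmts.getD i []).Perm [Term.const Const.rho, Term.const x, Term.const y])
    (hNo : ∀ i, i < Q.stmts.length →
      Q.value i ≠ eConst Const.rho + eConst (Const.node a))
    (hu : ∀ i j, Term.var i ∈ Q.ret → Term.var j ∈ Q.ret → Q.value i c = 1 → Q.value j c = 1 →
      i = j) :
    (∀ i, i < Q.stmts.length → Term.var i ∈ Q.ret →
        Q.value i = eConst Const.rho + eConst (Const.node a) + eConst c →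
        (Q.stmts.getD i []).Perm
          [Term.const Const.rho, Term.const (Const.node a), Term.const c]) ∨
      FreeConst Q c := by
  by_cases hF : FreeConst Q c
  · exact Or.inr hF
  refine Or.inl ?_
  intro i hi hr hv
  have hic : Q.value i c = 1 := by
    rw [hv]; simp [eConst, hcr, hca]
  rcases hGoal i hi hr with h2 | ⟨x, y, hp⟩
  · exfalso
    -- the first variable whose value involves `c`
    have hex : ∃ k, k < Q.stmts.length ∧ Q.value k c = 1 := ⟨i, hi, hic⟩
    classical
    obtain ⟨hk, hkc⟩ := Nat.find_spec hex
    have hmin : ∀ m, m < Nat.find hex → ¬ (m < Q.stmts.length ∧ Q.value m c = 1) :=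
      fun m hm => Nat.find_min hex hm
    generalize Nat.find hex = k at hk hkc hmin
    have hmem : Term.const c ∈ Q.stmts.getD k [] := by
      by_contra hn
      have : Q.value k c = 0 := by
        rw [value_eq Q k hk]
        apply list_sum_apply_zero
        intro f hf
        obtain ⟨t, ht, rfl⟩ := List.mem_map.1 hf
        cases t with
        | const d =>
          have : c ≠ d := by rintro rfl; exact hn ht
          simp [Term.eval, eConst, this]
        | var j =>
          have hj := Q.wfStmts k hk _ ht j rfl
          apply zmod2_ne
          intro h1
          exact hmin j hj ⟨hj.trans hk, h1⟩
      rw [this] at hkc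
      exact absurd hkc (by decide)
    have hkr : Term.var k ∈ Q.ret := by
      by_contra hn
      exact hF ⟨k, hk, hn, hmem⟩
    have hki := hu k i hkr hr hkc hic
    subst hki
    obtain ⟨r, hperm⟩ : ∃ r, (Q.stmts.getD k []).Perm (Term.const c :: r) :=
      ⟨_, List.perm_cons_erase hmem⟩
    have hlen := hperm.length_eq
    rw [h2] at hlen
    obtain ⟨t, rfl⟩ : ∃ t, r = [t] := List.length_eq_one_iff.1 (by simp at hlen; omega)
    have hval := value_eq Q k hk
    rw [(hperm.map _).sum_eq, hv] at hval
    have ht : Term.eval Q.envList t = eConst Const.rho + eConst (Const.node a) := by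
      simp only [List.map_cons, List.map_nil, List.sum_cons, List.sum_nil, add_zero] at hval
      rw [add_comm] at hval
      exact (add_left_cancel hval).symm
    cases t with
    | const d =>
      have e1 := congrFun ht Const.rho
      have e2 := congrFun ht (Const.node a)
      simp [Term.eval, eConst] at e1 e2
      rw [← e1] at e2
      simp at e2
    | var j =>
      have hj := Q.wfStmts k hk (Term.var j) (hperm.mem_iff.2 (by simp)) j rfl
      exact hNo j (hj.trans hk) ht
  · have hval := value_eq Q i hi
    rw [(hp.map _).sum_eq, hv] at hval
    simp only [List.map_cons, List.map_nil, List.sum_cons, List.sum_nil, add_zero,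
      Term.eval, add_assoc] at hval
    have hxy := add_left_cancel hval
    refine hp.trans (List.Perm.cons _ ?_)
    have e1 := congrFun hxy c
    have e2 := congrFun hxy (Const.node a)
    simp only [Pi.add_apply, eConst, if_neg hca, if_neg hca.symm, if_true] at e1 e2
    by_cases h1 : c = x
    · subst h1
      by_cases h2 : Const.node a = y
      · subst h2; exact List.Perm.swap _ _ _
      · simp [h2, hca.symm] at e2
    · by_cases h2 : c = y
      · subst h2
        by_cases h3 : Const.node a = x
        · subst h3; exact List.Perm.refl _
        · simp [h3, hca.symm] at e2
      · simp [h1, h2] at e1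

theorem target_ne {N : Type} [DecidableEq N] (L : List (N × N)) (nodes : List N) (a : N)
    (hL : ∀ p ∈ L, p.1 ≠ p.2) :
    ∀ f ∈ targetValues L nodes, f ≠ eConst Const.rho + eConst (Const.node a) := by
  intro f hf he
  simp only [targetValues, List.mem_append, List.mem_map, List.mem_flatMap, List.mem_cons,
    List.not_mem_nil, or_false] at hf
  rcases hf with ⟨p, hp, rfl⟩ | ⟨b, hb, rfl | rfl⟩
  · have hne := hL p hp
    have e1 := congrFun he (Const.node p.1)
    have e2 := congrFun he (Const.node p.2)
    simp [eConst, hne, hne.symm] at e1 e2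
    by_cases h1 : p.1 = a
    · by_cases h2 : p.2 = a
      · exact hne (h1.trans h2.symm)
      · simp [h2] at e2
    · simp [h1] at e1
  · have e1 := congrFun he (Const.lam b)
    simp [eConst] at e1
  · have e1 := congrFun he (Const.mu b)
    simp [eConst] at e1

theorem target_pairwise {N : Type} [DecidableEq N] (L : List (N × N)) (nodes : List N) (a : N)
    (hn : nodes.Nodup) (c : Const N) (hc : c = Const.lam a ∨ c = Const.mu a) :
    (targetValues L nodes).Pairwise (fun f g => ¬ (f c = 1 ∧ g c = 1)) := by
  have hz : ∀ f ∈ L.map (fun p : N × N =>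
      eConst Const.rho + eConst (Const.node p.1) + eConst (Const.node p.2)), f c = 0 := by
    intro f hf
    obtain ⟨p, _, rfl⟩ := List.mem_map.1 hf
    rcases hc with rfl | rfl <;> simp [eConst]
  unfold targetValues
  rw [List.pairwise_append]
  refine ⟨?_, ?_, ?_⟩
  · apply List.pairwise_of_forall_mem_list
    intro f hf g hg h
    rw [hz f hf] at h
    exact absurd h.1 (by decide)
  · rw [List.pairwise_flatMap]
    refine ⟨?_, ?_⟩
    · intro b _
      rcases hc with rfl | rfl <;> simp [eConst]
    · refine List.Pairwise.imp ?_ hn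
      intro b d hbd f hf g hg h
      simp only [List.mem_cons, List.not_mem_nil, or_false] at hf hg
      rcases hc with rfl | rfl <;> rcases hf with rfl | rfl <;> rcases hg with rfl | rfl <;>
        simp [eConst] at h
      · exact hbd (h.1.symm.trans h.2)
      · exact hbd (h.1.symm.trans h.2)
  · intro f hf g hg h
    rw [hz f hf] at h
    exact absurd h.1 (by decide)

end Helpers

/-- **Proposition A1 of the appendix.**  Let `G` be a finite simple graph with node set
`N` (with `L` enumerating the edges and `nodes` enumerating `N`), let `a ∈ N`, and let
`Q` be a MultiSLP equivalent to `P_G` such that: (i) every temporal variable of `Q`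
whose value is `e_x + e_y` (resp. `e_x + e_y + e_z`) for distinct constants is defined
by the statement `v ← x ⊕ y` (resp. `v ← x ⊕ y ⊕ z`); and (ii) the defining statement
of every goal variable either has exactly two arguments or is of the form
`g ← ρ ⊕ x ⊕ y` with constants `x, y`.  Suppose `Q` contains no variable `Γ_a`, i.e.
no temporal variable with value `e_ρ + e_a`.  Then for the local node `λ_a`, either
the goal `g_{aλ_a}` is defined by the statement `g_{aλ_a} ← ρ ⊕ a ⊕ λ_a`, or the
constant `λ_a` freely appears in `Q`; and the same holds for `μ_a`. -/
theorem no_gamma_implies_free {N : Type} [Fintype N] [DecidableEq N]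
    (G : SimpleGraph N) [DecidableRel G.Adj]
    (L : List (N × N)) (nodes : List N)
    (hnodesN : nodes.Nodup) (hnodesA : ∀ a : N, a ∈ nodes)
    (hLN : (L.map fun p => s(p.1, p.2)).Nodup)
    (hLadj : ∀ p ∈ L, G.Adj p.1 p.2)
    (hLall : ∀ a b : N, G.Adj a b → s(a, b) ∈ L.map fun p => s(p.1, p.2))
    (Q : MultiSLP (Const N)) (hQ : Q.result = targetValues L nodes)
    (hTemp2 : ∀ i, i < Q.stmts.length → Term.var i ∉ Q.ret →
      ∀ x y : Const N, x ≠ y → Q.value i = eConst x + eConst y →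
        (Q.stmts.getD i []).Perm [Term.const x, Term.const y])
    (hTemp3 : ∀ i, i < Q.stmts.length → Term.var i ∉ Q.ret →
      ∀ x y z : Const N, x ≠ y → x ≠ z → y ≠ z →
        Q.value i = eConst x + eConst y + eConst z →
        (Q.stmts.getD i []).Perm [Term.const x, Term.const y, Term.const z])
    (hGoal : ∀ i, i < Q.stmts.length → Term.var i ∈ Q.ret →
      (Q.stmts.getD i []).length = 2 ∨
      ∃ x y : Const N,
        (Q.stmts.getD i []).Perm [Term.const Const.rho, Term.const x, Term.const y])
    (a : N)
    (hNoGamma : ∀ i, i < Q.stmts.length → Term.var i ∉ Q.ret →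
      Q.value i ≠ eConst Const.rho + eConst (Const.node a)) :
    ((∀ i, i < Q.stmts.length → Term.var i ∈ Q.ret →
        Q.value i = eConst Const.rho + eConst (Const.node a) + eConst (Const.lam a) →
        (Q.stmts.getD i []).Perm
          [Term.const Const.rho, Term.const (Const.node a), Term.const (Const.lam a)]) ∨
      FreeConst Q (Const.lam a)) ∧
    ((∀ i, i < Q.stmts.length → Term.var i ∈ Q.ret →
        Q.value i = eConst Const.rho + eConst (Const.node a) + eConst (Const.mu a) →
        (Q.stmts.getD i []).Perm
          [Term.const Const.rho, Term.const (Const.node a), Term.const (Const.mu a)]) ∨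
      FreeConst Q (Const.mu a)) := by
  have hNo : ∀ i, i < Q.stmts.length →
      Q.value i ≠ eConst Const.rho + eConst (Const.node a) := by
    intro i hi
    by_cases hr : Term.var i ∈ Q.ret
    · apply target_ne L nodes a (fun p hp => (hLadj p hp).ne)
      rw [← hQ]
      exact List.mem_map.2 ⟨_, hr, rfl⟩
    · exact hNoGamma i hi hr
  have hu : ∀ c : Const N, (c = Const.lam a ∨ c = Const.mu a) →
      ∀ i j, Term.var i ∈ Q.ret → Term.var j ∈ Q.ret → Q.value i c = 1 → Q.value j c = 1 →
      i = j := by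
    intro c hc i j hi hj h1 h2
    by_contra hij
    have hp := target_pairwise L nodes a hnodesN c hc
    rw [← hQ, MultiSLP.result, List.pairwise_map] at hp
    haveI : Std.Symm (fun s t : Term (Const N) =>
        ¬ (Term.eval Q.envList s c = 1 ∧ Term.eval Q.envList t c = 1)) :=
      ⟨fun _ _ h h' => h ⟨h'.2, h'.1⟩⟩
    exact List.Pairwise.forall hp hi hj
      (fun h => hij (by injection h)) ⟨h1, h2⟩
  exact ⟨core Q a _ (by simp) (by simp) hGoal hNo (hu _ (Or.inl rfl)),
    core Q a _ (by simp) (by simp) hGoal hNo (hu _ (Or.inr rfl))⟩
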